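/- Let P_0, P_1, …, P_{n−1} be points of ℝ² with coordinates P_i = (x_i, y_i), indices taken modulo n (n ≥ 3), and suppose that for every i the triple (0, P_i, P_{i+1}) (where 0 is the origin) is affinely independent. Then Σ_{i=0}^{n−1} Area(0, P_i, P_{i+1})·CC(0, P_i, P_{i+1}) = (1/4)·( Σ_{i=0}^{n−1} y_i·(x_{i−1}² + y_{i−1}² − x_{i+1}² − y_{i+1}²), −Σ_{i=0}^{n−1} x_i·(x_{i−1}² + y_{i−1}² − x_{i+1}² − y_{i+1}²) ). -/

import Mathlib

/-- The signed area of the ordered triple `(A, B, C)` of points of `ℝ²`: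
`(1/2) · det(B − A, C − A)`. -/
noncomputable def sarea (A B C : EuclideanSpace ℝ (Fin 2)) : ℝ :=
  ((B 0 - A 0) * (C 1 - A 1) - (B 1 - A 1) * (C 0 - A 0)) / 2

theorem ccm_aux (c A : EuclideanSpace ℝ (Fin 2))
    (h : dist c (0 : EuclideanSpace ℝ (Fin 2)) = dist c A) :
    2 * (c 0 * A 0 + c 1 * A 1) = A 0 ^ 2 + A 1 ^ 2 := by
  have h2 : dist c (0 : EuclideanSpace ℝ (Fin 2)) ^ 2 = dist c A ^ 2 := by rw [h]
  rw [EuclideanSpace.dist_sq_eq, EuclideanSpace.dist_sq_eq] at h2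
  simp only [Fin.sum_univ_two, Real.dist_eq, sq_abs, PiLp.zero_apply] at h2
  linarith

theorem ccm_shift (n : ℕ) [NeZero n] (f g : ZMod n → ℝ) :
    ∑ i : ZMod n, f i * g (i + 1) = ∑ i : ZMod n, f (i - 1) * g i := by
  refine Fintype.sum_equiv (Equiv.addRight 1) _ _ ?_
  intro i
  simp

/-- The explicit coordinate formula for the (area-weighted) circumcenter of mass of the polygon
`P_0 P_1 ⋯ P_{n−1}`, computed from the fan triangulation with apex at the origin. -/
theorem ccm_explicit_formula (n : ℕ) [NeZero n] (hn : 3 ≤ n)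
    (P : ZMod n → EuclideanSpace ℝ (Fin 2))
    (hP : ∀ i : ZMod n, AffineIndependent ℝ ![(0 : EuclideanSpace ℝ (Fin 2)), P i, P (i + 1)])
    (cc : ZMod n → EuclideanSpace ℝ (Fin 2))
    (hcc : ∀ i : ZMod n, dist (cc i) (0 : EuclideanSpace ℝ (Fin 2)) = dist (cc i) (P i) ∧
      dist (cc i) (0 : EuclideanSpace ℝ (Fin 2)) = dist (cc i) (P (i + 1))) :
    (∑ i : ZMod n, sarea 0 (P i) (P (i + 1)) • cc i) 0 =
        (1 / 4) * ∑ i : ZMod n, P i 1 *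
          ((P (i - 1) 0) ^ 2 + (P (i - 1) 1) ^ 2 - (P (i + 1) 0) ^ 2 - (P (i + 1) 1) ^ 2)
    ∧ (∑ i : ZMod n, sarea 0 (P i) (P (i + 1)) • cc i) 1 =
        (1 / 4) * ∑ i : ZMod n, -(P i 0) *
          ((P (i - 1) 0) ^ 2 + (P (i - 1) 1) ^ 2 - (P (i + 1) 0) ^ 2 - (P (i + 1) 1) ^ 2) := by
  have e : ∀ k : Fin 2, (∑ i : ZMod n, sarea 0 (P i) (P (i + 1)) • cc i) k
      = ∑ i : ZMod n, sarea 0 (P i) (P (i + 1)) * cc i k := by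
    intro k
    simp
  rw [e, e]
  constructor
  · have s := ccm_shift n (fun i => P i 0 ^ 2 + P i 1 ^ 2) (fun i => P i 1)
    have t : ∀ i, sarea 0 (P i) (P (i + 1)) * cc i 0 = (1 / 4) *
        ((P i 0 ^ 2 + P i 1 ^ 2) * P (i + 1) 1 - P i 1 * (P (i + 1) 0 ^ 2 + P (i + 1) 1 ^ 2)) := by
      intro i
      have h1 := ccm_aux _ _ (hcc i).1
      have h2 := ccm_aux _ _ (hcc i).2
      rw [← h1, ← h2]
      simp only [sarea, PiLp.zero_apply]
      ring
    simp only [t]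
    rw [← Finset.mul_sum, Finset.sum_sub_distrib, s, ← Finset.sum_sub_distrib]
    congr 1
    refine Finset.sum_congr rfl fun i _ => ?_
    ring
  · have s := ccm_shift n (fun i => P i 0 ^ 2 + P i 1 ^ 2) (fun i => P i 0)
    have t : ∀ i, sarea 0 (P i) (P (i + 1)) * cc i 1 = (1 / 4) *
        (P i 0 * (P (i + 1) 0 ^ 2 + P (i + 1) 1 ^ 2) - (P i 0 ^ 2 + P i 1 ^ 2) * P (i + 1) 0) := by
      intro i
      have h1 := ccm_aux _ _ (hcc i).1
      have h2 := ccm_aux _ _ (hcc i).2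
      rw [← h1, ← h2]
      simp only [sarea, PiLp.zero_apply]
      ring
    simp only [t]
    rw [← Finset.mul_sum, Finset.sum_sub_distrib, s, ← Finset.sum_sub_distrib]
    congr 1
    refine Finset.sum_congr rfl fun i _ => ?_
    ring
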